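/- Let p = 3 and q = p^m with m an even positive integer. Then n_{1,0} + n_{−1,0} + p²(n_{1,1}+n_{−1,1}) + p⁴(n_{1,2}+n_{−1,2}) + p⁶(n_{1,3}+n_{−1,3}) + p⁸(n_{1,4}+n_{−1,4}) = (8(p^m − 1)² − p^m + 1)·p^m. -/

import Mathlib

open Complex Finset

noncomputable def zetaPow (p : ℕ) (a : ZMod p) : ℂ :=
  Complex.exp (2 * Real.pi * Complex.I * (a.val : ℂ) / (p : ℂ))

noncomputable def expSum (p m : ℕ) [Fact p.Prime]
    (α β γ : GaloisField p m) : ℂ :=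
  letI : Fintype (GaloisField p m) := Fintype.ofFinite _
  ∑ x : GaloisField p m,
    zetaPow p ((Algebra.trace (ZMod p) (GaloisField p m))
      (α * x ^ 2 + β * x ^ (p + 1) + γ * x ^ (p ^ 2 + 1)))

noncomputable def nval (p m : ℕ) (ε : ℤ) (j : ℕ) : ℂ :=
  if j % 2 = 0 then (ε : ℂ) * ((Real.sqrt ((p : ℝ) ^ (m + j)) : ℝ) : ℂ)
  else (ε : ℂ) * Complex.I * ((Real.sqrt ((p : ℝ) ^ (m + j)) : ℝ) : ℂ)

noncomputable def nn (p m : ℕ) [Fact p.Prime] (ε : ℤ) (j : ℕ) : ℕ :=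
  {t : GaloisField p m × GaloisField p m × GaloisField p m |
    t ≠ (0, 0, 0) ∧ expSum p m t.1 t.2.1 t.2.2 = nval p m ε j}.ncard

/-- The number of pairs having at least one coordinate in `A`. -/
theorem sum_sum_ite_mem_or_mem {F : Type*} [Fintype F] [DecidableEq F] (A : Finset F) :
    ∑ b : F, ∑ c : F, (if b ∈ A ∨ c ∈ A then (1 : ℤ) else 0) =
      (Fintype.card F : ℤ) ^ 2 - ((Fintype.card F : ℤ) - A.card) ^ 2 := by
  have hsplit : ∀ b c : F, (if b ∈ A ∨ c ∈ A then (1 : ℤ) else 0) =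
      1 - (1 - if b ∈ A then 1 else 0) * (1 - if c ∈ A then 1 else 0) := by
    intro b c
    by_cases hb : b ∈ A <;> by_cases hc : c ∈ A <;> simp [hb, hc]
  have hsum : ∑ b : F, (1 - if b ∈ A then (1 : ℤ) else 0) = (Fintype.card F : ℤ) - A.card := by
    simp
  have hprod : ∑ b : F, ∑ c : F,
      (1 - if b ∈ A then (1 : ℤ) else 0) * (1 - if c ∈ A then (1 : ℤ) else 0) =
      ((Fintype.card F : ℤ) - A.card) ^ 2 := by
    rw [← Finset.sum_mul_sum, hsum, sq]
  rw [← hprod]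
  simp_rw [hsplit, Finset.sum_sub_distrib]
  simp
  ring

theorem three_eq_zero_of_charP (F : Type*) [CommRing F] [CharP F 3] : (3 : F) = 0 := by
  exact_mod_cast CharP.cast_eq_zero F 3

section Count

variable {F : Type*} [Field F]

/-- The conditions on `d` and `(b, c)` cut out by the two equations when `a` is invertible. -/
theorem split_system_iff {a b c d : F} (ha : a ≠ 0) [DecidableEq F] :
    (a * d = b * c ∧ a * d ^ 3 + a ^ 3 * d = b * c ^ 3 + b ^ 3 * c) ↔
      d = b * c / a ∧ (b ∈ ({0, a, -a} : Finset F) ∨ c ∈ ({0, a, -a} : Finset F)) := by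
  have key : a * d = b * c → a ^ 2 * (a * d ^ 3 + a ^ 3 * d - (b * c ^ 3 + b ^ 3 * c)) =
      (b * (b - a) * (b + a)) * (c * (c - a) * (c + a)) := by
    intro h
    linear_combination ((a * d) ^ 2 + a * d * (b * c) + (b * c) ^ 2 + a ^ 4) * h
  have hd : d = b * c / a ↔ a * d = b * c := by
    rw [eq_div_iff ha, mul_comm]
  have hmem : ∀ x : F, x ∈ ({0, a, -a} : Finset F) ↔ x * (x - a) * (x + a) = 0 := by
    intro x
    simp only [Finset.mem_insert, Finset.mem_singleton, mul_eq_zero, sub_eq_zero,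
      add_eq_zero_iff_eq_neg, or_assoc]
  rw [hd, hmem, hmem]
  refine and_congr_right fun h => ?_
  rw [← mul_eq_zero, ← key h, mul_eq_zero, sub_eq_zero]
  simp [ha]

variable [CharP F 3]

theorem card_zero_self_neg {a : F} (ha : a ≠ 0) [DecidableEq F] :
    ({0, a, -a} : Finset F).card = 3 := by
  have h3 := three_eq_zero_of_charP F
  have hne : a ≠ -a := by
    intro h
    apply ha
    linear_combination a * h3 - h
  rw [Finset.card_insert_of_notMem, Finset.card_pair hne]
  simp [ha.symm, ha]

/-- Coordinates over the prime field in which `x² + y² + z² + w²` becomes `a d - b c`. -/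
def sumSquaresSplitting : F × F × F × F ≃ F × F × F × F where
  toFun v := (v.1 - v.2.2.1 - v.2.2.2, -(v.2.1 - v.2.2.1 + v.2.2.2), v.2.1 + v.2.2.1 - v.2.2.2,
    v.1 + v.2.2.1 + v.2.2.2)
  invFun u := (-(u.1 + u.2.2.2), u.2.1 - u.2.2.1, -u.1 + u.2.2.2 + u.2.1 + u.2.2.1,
    -(u.1 - u.2.2.2 + u.2.1 + u.2.2.1))
  left_inv := by
    rintro ⟨x, y, z, w⟩
    have h3 := three_eq_zero_of_charP F
    simp only [Prod.mk.injEq]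
    refine ⟨?_, ?_, ?_, ?_⟩
    · linear_combination -x * h3
    · linear_combination -y * h3
    · linear_combination z * h3
    · linear_combination w * h3
  right_inv := by
    rintro ⟨a, b, c, d⟩
    have h3 := three_eq_zero_of_charP F
    simp only [Prod.mk.injEq]
    refine ⟨?_, ?_, ?_, ?_⟩
    · ring_nf
      linear_combination -d * h3
    · linear_combination c * h3
    · linear_combination b * h3
    · linear_combination -a * h3

theorem sum_pow_ten_eq_zero {x y z w : F} (h2 : x ^ 2 + y ^ 2 + z ^ 2 + w ^ 2 = 0)
    (h4 : x ^ 4 + y ^ 4 + z ^ 4 + w ^ 4 = 0) : x ^ 10 + y ^ 10 + z ^ 10 + w ^ 10 = 0 := by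
  have h3 := three_eq_zero_of_charP F
  linear_combination (x ^ 10 + y ^ 10 + z ^ 10 + w ^ 10) * h3 -
    (2 * (x ^ 8 + y ^ 8 + z ^ 8 + w ^ 8) -
      (x ^ 2 + y ^ 2 + z ^ 2 + w ^ 2) * (x ^ 6 + y ^ 6 + z ^ 6 + w ^ 6) -
      2 * (x * y * z * w) ^ 2) * h2 -
    (x ^ 6 + y ^ 6 + z ^ 6 + w ^ 6 + 2 * ((x * y * z) ^ 2 + (x * y * w) ^ 2 + (x * z * w) ^ 2 +
      (y * z * w) ^ 2)) * h4

variable [Fintype F] [DecidableEq F]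

theorem sum_split_system :
    ∑ a : F, ∑ b : F, ∑ c : F, ∑ d : F,
      (if a * d = b * c ∧ a * d ^ 3 + a ^ 3 * d = b * c ^ 3 + b ^ 3 * c then (1 : ℤ) else 0) =
      8 * ((Fintype.card F : ℤ) - 1) ^ 2 + 1 := by
  have hne : ∀ a ∈ (Finset.univ : Finset F).erase 0, ∑ b : F, ∑ c : F, ∑ d : F,
      (if a * d = b * c ∧ a * d ^ 3 + a ^ 3 * d = b * c ^ 3 + b ^ 3 * c then (1 : ℤ) else 0) =
      (Fintype.card F : ℤ) ^ 2 - ((Fintype.card F : ℤ) - 3) ^ 2 := by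
    intro a ha
    have ha : a ≠ 0 := (Finset.mem_erase.mp ha).1
    have h := sum_sum_ite_mem_or_mem ({0, a, -a} : Finset F)
    rw [card_zero_self_neg ha] at h
    refine Eq.trans (Finset.sum_congr rfl fun b _ => Finset.sum_congr rfl fun c _ => ?_) h
    simp_rw [split_system_iff ha, ite_and]
    simp
  have hzero : ∑ b : F, ∑ c : F, ∑ d : F,
      (if 0 * d = b * c ∧ 0 * d ^ 3 + 0 ^ 3 * d = b * c ^ 3 + b ^ 3 * c then (1 : ℤ) else 0) =
      Fintype.card F * ((Fintype.card F : ℤ) ^ 2 - ((Fintype.card F : ℤ) - 1) ^ 2) := by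
    have h := sum_sum_ite_mem_or_mem ({0} : Finset F)
    rw [Finset.card_singleton, Nat.cast_one] at h
    rw [← h, Finset.mul_sum]
    refine Finset.sum_congr rfl fun b _ => ?_
    rw [Finset.mul_sum]
    refine Finset.sum_congr rfl fun c _ => ?_
    have hiff : ∀ d : F, (0 * d = b * c ∧ 0 * d ^ 3 + 0 ^ 3 * d = b * c ^ 3 + b ^ 3 * c) ↔
        (b ∈ ({0} : Finset F) ∨ c ∈ ({0} : Finset F)) := by
      intro d
      simp only [Finset.mem_singleton]
      constructor
      · rintro ⟨h, -⟩
        simpa using h.symm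
      · rintro (rfl | rfl) <;> simp
    simp_rw [hiff]
    simp
  rw [← Finset.add_sum_erase _ _ (Finset.mem_univ (0 : F)), hzero, Finset.sum_congr rfl hne,
    Finset.sum_const, Finset.card_erase_of_mem (Finset.mem_univ _), Finset.card_univ, nsmul_eq_mul,
    Nat.cast_sub Fintype.card_pos]
  push_cast
  ring

/-- The number of common zeros of the second, fourth and tenth power sums in four variables. -/
theorem sum_power_sums_eq_zero :
    ∑ v : F × F × F × F,
      (if v.1 ^ 2 + v.2.1 ^ 2 + v.2.2.1 ^ 2 + v.2.2.2 ^ 2 = 0 ∧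
          v.1 ^ 4 + v.2.1 ^ 4 + v.2.2.1 ^ 4 + v.2.2.2 ^ 4 = 0 ∧
          v.1 ^ 10 + v.2.1 ^ 10 + v.2.2.1 ^ 10 + v.2.2.2 ^ 10 = 0 then (1 : ℤ) else 0) =
      8 * ((Fintype.card F : ℤ) - 1) ^ 2 + 1 := by
  rw [← sum_split_system, ← Equiv.sum_comp sumSquaresSplitting.symm]
  simp only [Fintype.sum_prod_type]
  refine Finset.sum_congr rfl fun a _ => Finset.sum_congr rfl fun b _ =>
    Finset.sum_congr rfl fun c _ => Finset.sum_congr rfl fun d _ => if_congr ?_ rfl rfl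
  have h3 := three_eq_zero_of_charP F
  obtain ⟨⟨x, y, z, w⟩, hv⟩ := sumSquaresSplitting.surjective (a, b, c, d)
  rw [← hv, Equiv.symm_apply_apply]
  simp only [sumSquaresSplitting, Equiv.coe_fn_mk, Prod.mk.injEq] at hv ⊢
  obtain ⟨rfl, rfl, rfl, rfl⟩ := hv
  constructor
  · rintro ⟨h2, h4, -⟩
    constructor
    · linear_combination h2 - (z ^ 2 + w ^ 2) * h3
    · linear_combination (x ^ 4 + y ^ 4 - z ^ 4 - w ^ 4 - 8 * z ^ 2 * w ^ 2) * h3 - h4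
  · rintro ⟨hdet, hpolar⟩
    have h2 : x ^ 2 + y ^ 2 + z ^ 2 + w ^ 2 = 0 := by
      linear_combination hdet + (z ^ 2 + w ^ 2) * h3
    have h4 : x ^ 4 + y ^ 4 + z ^ 4 + w ^ 4 = 0 := by
      linear_combination (x ^ 4 + y ^ 4 - z ^ 4 - w ^ 4 - 8 * z ^ 2 * w ^ 2) * h3 - hpolar
    exact ⟨h2, h4, sum_pow_ten_eq_zero h2 h4⟩

end Count

theorem stdAddChar_three_one : ZMod.stdAddChar (1 : ZMod 3) = (-1 + I * √3) / 2 := by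
  rw [ZMod.stdAddChar_apply, ZMod.toCircle_apply]
  have hval : ((1 : ZMod 3).val : ℂ) = 1 := by
    rw [show (1 : ZMod 3).val = 1 from rfl, Nat.cast_one]
  have harg : 2 * (Real.pi : ℂ) * I * ((1 : ZMod 3).val : ℂ) / ((3 : ℕ) : ℂ) =
      ((Real.pi - Real.pi / 3 : ℝ) : ℂ) * I := by
    rw [hval]
    push_cast
    ring
  rw [harg, Complex.exp_mul_I, ← Complex.ofReal_cos, ← Complex.ofReal_sin, Real.cos_pi_sub,
    Real.sin_pi_sub, Real.cos_pi_div_three, Real.sin_pi_div_three]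
  push_cast
  ring

theorem ofReal_sqrt_three_sq : ((√3 : ℝ) : ℂ) ^ 2 = 3 := by
  rw [← Complex.ofReal_pow, Real.sq_sqrt (by norm_num)]
  norm_num

theorem stdAddChar_three_two : ZMod.stdAddChar (2 : ZMod 3) = (-1 - I * √3) / 2 := by
  rw [show (2 : ZMod 3) = 1 + 1 from rfl, AddChar.map_add_eq_mul, stdAddChar_three_one]
  linear_combination (1 / 4 : ℂ) * ((√3 : ℝ) : ℂ) ^ 2 * I_sq - (1 / 4 : ℂ) * ofReal_sqrt_three_sq

/-- The quadratic Gauss sums over `ZMod 3`. -/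
theorem sum_stdAddChar_three_mul_sq (c : ZMod 3) :
    ∑ x : ZMod 3, ZMod.stdAddChar (c * (x * x)) =
      if c = 0 then (3 : ℂ) else if c = 1 then I * √3 else -(I * √3) := by
  have hsum : ∑ x : ZMod 3, ZMod.stdAddChar (c * (x * x)) =
      (1 : ℂ) + 2 * ZMod.stdAddChar c := by
    rw [show (Finset.univ : Finset (ZMod 3)) = {0, 1, 2} from rfl]
    rw [Finset.sum_insert (by decide), Finset.sum_insert (by decide), Finset.sum_singleton,
      show (2 : ZMod 3) * 2 = 1 from rfl]
    simp
    ring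
  rw [hsum]
  have hcases : ∀ a : ZMod 3, a = 0 ∨ a = 1 ∨ a = 2 := by decide
  obtain rfl | rfl | rfl := hcases c
  · simp
    norm_num
  · rw [stdAddChar_three_one, if_neg (by decide), if_pos rfl]
    ring
  · rw [stdAddChar_three_two, if_neg (by decide), if_neg (by decide)]
    ring

theorem exists_prod_gauss_factors {ι : Type*} (s : Finset ι) (w : ι → ZMod 3) :
    ∃ (ε : ℤ) (k r : ℕ), (ε = 1 ∨ ε = -1) ∧ k + r = s.card ∧
      ∏ i ∈ s, (if w i = 0 then (3 : ℂ) else if w i = 1 then I * √3 else -(I * √3)) =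
        ε * 3 ^ k * (I * √3) ^ r := by
  classical
  induction s using Finset.induction_on with
  | empty => exact ⟨1, 0, 0, Or.inl rfl, rfl, by simp⟩
  | insert a s ha ih =>
    obtain ⟨ε, k, r, hε, hcard, hprod⟩ := ih
    rw [Finset.prod_insert ha, hprod, Finset.card_insert_of_notMem ha]
    split_ifs
    · exact ⟨ε, k + 1, r, hε, by omega, by ring⟩
    · exact ⟨ε, k, r + 1, hε, by omega, by ring⟩
    · exact ⟨-ε, k, r + 1, by omega, by omega, by push_cast; ring⟩

theorem AddChar.map_finset_sum {ι A M : Type*} [AddCommMonoid A] [CommMonoid M] (ψ : AddChar A M)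
    (s : Finset ι) (f : ι → A) : ψ (∑ i ∈ s, f i) = ∏ i ∈ s, ψ (f i) :=
  map_prod ψ.toMonoidHom (fun i => Multiplicative.ofAdd (f i)) s

/-- The exponential sum of a quadratic form over `ZMod 3`. -/
theorem exists_sum_stdAddChar_quadraticForm {V : Type*} [AddCommGroup V] [Module (ZMod 3) V]
    [Fintype V] (Q : QuadraticForm (ZMod 3) V) :
    ∃ (ε : ℤ) (k r : ℕ), (ε = 1 ∨ ε = -1) ∧ k + r = Module.finrank (ZMod 3) V ∧
      ∑ v : V, ZMod.stdAddChar (Q v) = (ε : ℂ) * 3 ^ k * (I * √3) ^ r := by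
  have : Fact (Nat.Prime 3) := ⟨by norm_num⟩
  have : Invertible (2 : ZMod 3) := ⟨2, rfl, rfl⟩
  obtain ⟨w, ⟨e⟩⟩ := QuadraticForm.equivalent_weightedSumSquares Q
  obtain ⟨ε, k, r, hε, hcard, hprod⟩ := exists_prod_gauss_factors Finset.univ w
  refine ⟨ε, k, r, hε, by simpa using hcard, ?_⟩
  rw [← hprod, ← Equiv.sum_comp e.toLinearEquiv.toEquiv.symm]
  simp_rw [← sum_stdAddChar_three_mul_sq]
  rw [Finset.prod_univ_sum, Fintype.piFinset_univ]
  refine Finset.sum_congr rfl fun v _ => ?_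
  rw [← AddChar.map_finset_sum]
  congr 1
  rw [← e.map_app]
  simp [QuadraticMap.weightedSumSquares_apply]

/-- The polynomial whose roots form the radical of `Tr (α x² + β x⁴ + γ x¹⁰)`. -/
noncomputable def radicalPoly {F : Type*} [Field F] (α β γ : F) : Polynomial F :=
  .C (γ ^ 9) * .X ^ 81 + .C (β ^ 9) * .X ^ 27 + .C (2 * α ^ 9) * .X ^ 9 + .C (β ^ 3) * .X ^ 3 +
    .C γ * .X

theorem natDegree_radicalPoly_le {F : Type*} [Field F] (α β γ : F) :
    (radicalPoly α β γ).natDegree ≤ 81 := by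
  unfold radicalPoly
  compute_degree

section TraceChar

variable (F : Type*) [Field F] [Algebra (ZMod 3) F]

/-- The canonical additive character of a field of characteristic three. -/
noncomputable def traceChar : AddChar F ℂ :=
  (ZMod.stdAddChar (N := 3)).compAddMonoidHom (Algebra.trace (ZMod 3) F).toAddMonoidHom

variable {F}

theorem traceChar_apply (x : F) :
    traceChar F x = ZMod.stdAddChar (Algebra.trace (ZMod 3) F x) := rfl

theorem exists_sum_traceChar_quadratic [Fintype F] (α β γ : F) :
    ∃ (ε : ℤ) (k r : ℕ), (ε = 1 ∨ ε = -1) ∧ k + r = Module.finrank (ZMod 3) F ∧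
      ∑ x : F, traceChar F (α * x ^ 2 + β * x ^ 4 + γ * x ^ 10) =
        (ε : ℂ) * 3 ^ k * (I * √3) ^ r := by
  have : Fact (Nat.Prime 3) := ⟨by norm_num⟩
  have : CharP F 3 := charP_of_injective_algebraMap (algebraMap (ZMod 3) F).injective 3
  let frob : F →ₗ[ZMod 3] F := (FiniteField.frobeniusAlgHom (ZMod 3) F).toLinearMap
  let id' : F →ₗ[ZMod 3] F := LinearMap.id
  let Q : QuadraticMap (ZMod 3) F F :=
    QuadraticMap.linMulLin (LinearMap.mulLeft (ZMod 3) α) id' +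
      QuadraticMap.linMulLin (LinearMap.mulLeft (ZMod 3) β) frob +
      QuadraticMap.linMulLin (LinearMap.mulLeft (ZMod 3) γ) (frob ∘ₗ frob)
  obtain ⟨ε, k, r, hε, hkr, hsum⟩ :=
    exists_sum_stdAddChar_quadraticForm ((Algebra.trace (ZMod 3) F).compQuadraticMap Q)
  refine ⟨ε, k, r, hε, hkr, ?_⟩
  rw [← hsum]
  refine Finset.sum_congr rfl fun x _ => ?_
  rw [traceChar_apply, LinearMap.compQuadraticMap_apply]
  congr 2
  simp [Q, frob, id']
  ring

theorem radicalPoly_ne_zero {α β γ : F} (h : (α, β, γ) ≠ (0, 0, 0)) : radicalPoly α β γ ≠ 0 := by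
  have : CharP F 3 := charP_of_injective_algebraMap (algebraMap (ZMod 3) F).injective 3
  have h2 : (2 : F) ≠ 0 := by
    exact Ring.two_ne_zero (by rw [ringChar.eq F 3]; decide)
  intro h0
  apply h
  have hγ := congrArg (Polynomial.coeff · 1) h0
  have hβ := congrArg (Polynomial.coeff · 3) h0
  have hα := congrArg (Polynomial.coeff · 9) h0
  simp only [radicalPoly, Polynomial.coeff_add, Polynomial.coeff_C_mul, Polynomial.coeff_X,
    Polynomial.coeff_X_pow, Polynomial.coeff_zero] at hα hβ hγ
  norm_num [h2] at hα hβ hγ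
  simp [hα, hβ, hγ]

variable [Fintype F]

theorem isPrimitive_traceChar : (traceChar F).IsPrimitive := by
  have : Fact (Nat.Prime 3) := ⟨by norm_num⟩
  refine AddChar.IsPrimitive.of_ne_one fun h => ?_
  obtain ⟨x, hx⟩ := Algebra.trace_surjective (ZMod 3) F 1
  have h1 : ZMod.stdAddChar (1 : ZMod 3) = (1 : ℂ) := by
    rw [← hx, ← traceChar_apply, h, AddChar.one_apply]
  rw [← AddChar.map_zero_eq_one (ZMod.stdAddChar (N := 3))] at h1
  exact one_ne_zero (ZMod.injective_stdAddChar h1)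

theorem traceChar_cube (x : F) : traceChar F (x ^ 3) = traceChar F x := by
  have : Fact (Nat.Prime 3) := ⟨by norm_num⟩
  have : CharP F 3 := charP_of_injective_algebraMap (algebraMap (ZMod 3) F).injective 3
  rw [traceChar_apply, traceChar_apply,
    ← Algebra.trace_eq_of_algEquiv (FiniteField.frobeniusAlgEquiv (ZMod 3) F 3) x]
  simp

theorem sum_traceChar_polar [DecidableEq F] (α β γ u : F) :
    ∑ y : F, traceChar F (2 * α * u * y + β * (u ^ 3 * y + u * y ^ 3) +
        γ * (u ^ 9 * y + u * y ^ 9)) =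
      if (radicalPoly α β γ).eval u = 0 then (Fintype.card F : ℂ) else 0 := by
  have : Fact (Nat.Prime 3) := ⟨by norm_num⟩
  have : CharP F 3 := charP_of_injective_algebraMap (algebraMap (ZMod 3) F).injective 3
  have hterm : ∀ y : F, traceChar F (2 * α * u * y + β * (u ^ 3 * y + u * y ^ 3) +
        γ * (u ^ 9 * y + u * y ^ 9)) = traceChar F (y ^ 9 * (radicalPoly α β γ).eval u) := by
    intro y
    have h9 : ∀ z : F, traceChar F z = traceChar F (z ^ 9) := fun z => by
      rw [← traceChar_cube z, ← traceChar_cube (z ^ 3), ← pow_mul]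
    rw [show 2 * α * u * y + β * (u ^ 3 * y + u * y ^ 3) + γ * (u ^ 9 * y + u * y ^ 9) =
      (2 * α * u + β * u ^ 3 + γ * u ^ 9) * y + β * u * y ^ 3 + γ * u * y ^ 9 by ring,
      AddChar.map_add_eq_mul, AddChar.map_add_eq_mul, h9 (_ * y), ← traceChar_cube (β * u * y ^ 3),
      ← AddChar.map_add_eq_mul, ← AddChar.map_add_eq_mul]
    congr 1
    have h9add : ∀ a b : F, (a + b) ^ 9 = a ^ 9 + b ^ 9 := fun a b => by
      rw [show 9 = 3 ^ 2 by norm_num, add_pow_char_pow]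
    have h2 : (2 : F) ^ 9 = 2 := by
      have h3 : (3 : F) = 0 := by exact_mod_cast CharP.cast_eq_zero F 3
      linear_combination 170 * h3
    simp only [mul_pow, h9add, radicalPoly, h2]
    simp
    ring
  have hbij : Function.Bijective fun y : F => y ^ 9 := by
    rw [show (fun y : F => y ^ 9) = iterateFrobenius F 3 2 by
      ext y; rw [iterateFrobenius_def]; norm_num]
    exact Finite.injective_iff_bijective.mp (iterateFrobenius F 3 2).injective
  simp_rw [hterm]
  rw [hbij.sum_comp fun y => traceChar F (y * (radicalPoly α β γ).eval u),
    AddChar.sum_mulShift _ isPrimitive_traceChar]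
  push_cast
  rfl

theorem norm_sum_traceChar_quadratic_sq_le {α β γ : F} (h : (α, β, γ) ≠ (0, 0, 0)) :
    ‖∑ x : F, traceChar F (α * x ^ 2 + β * x ^ 4 + γ * x ^ 10)‖ ^ 2 ≤
      Fintype.card F * 81 := by
  classical
  have : Fact (Nat.Prime 3) := ⟨by norm_num⟩
  have : CharP F 3 := charP_of_injective_algebraMap (algebraMap (ZMod 3) F).injective 3
  set q : F → F := fun x => α * x ^ 2 + β * x ^ 4 + γ * x ^ 10 with hq
  have hpolar : ∀ u y : F, traceChar F (q (u + y)) * (starRingEnd ℂ) (traceChar F (q y)) =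
      traceChar F (q u) * traceChar F (2 * α * u * y + β * (u ^ 3 * y + u * y ^ 3) +
        γ * (u ^ 9 * y + u * y ^ 9)) := by
    intro u y
    rw [← AddChar.map_neg_eq_conj, ← AddChar.map_add_eq_mul, ← AddChar.map_add_eq_mul]
    congr 1
    have h3add : (u + y) ^ 3 = u ^ 3 + y ^ 3 := add_pow_char u y 3
    have h9add : (u + y) ^ 9 = u ^ 9 + y ^ 9 := by
      rw [show 9 = 3 ^ 2 by norm_num, add_pow_char_pow]
    simp only [hq]
    rw [pow_succ (u + y) 3, pow_succ (u + y) 9, h3add, h9add]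
    ring
  have hexpand : (∑ x, traceChar F (q x)) * (starRingEnd ℂ) (∑ x, traceChar F (q x)) =
      ∑ u, traceChar F (q u) *
        if (radicalPoly α β γ).eval u = 0 then (Fintype.card F : ℂ) else 0 := by
    simp_rw [← sum_traceChar_polar, Finset.mul_sum, ← hpolar]
    rw [map_sum, Finset.sum_mul_sum, Finset.sum_comm, Finset.sum_comm (f := fun u y =>
      traceChar F (q (u + y)) * _)]
    refine Finset.sum_congr rfl fun y _ => ?_
    exact (Equiv.sum_comp (Equiv.addRight y)
      fun x => traceChar F (q x) * (starRingEnd ℂ) (traceChar F (q y))).symm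
  have hnorm : ‖∑ x, traceChar F (q x)‖ ^ 2 =
      ‖(∑ x, traceChar F (q x)) * (starRingEnd ℂ) (∑ x, traceChar F (q x))‖ := by
    rw [norm_mul, RCLike.norm_conj, sq]
  rw [hnorm, hexpand]
  calc ‖∑ u, traceChar F (q u) *
        if (radicalPoly α β γ).eval u = 0 then (Fintype.card F : ℂ) else 0‖
      ≤ ∑ u, if (radicalPoly α β γ).eval u = 0 then (Fintype.card F : ℝ) else 0 := by
        refine (norm_sum_le _ _).trans (Finset.sum_le_sum fun u _ => ?_)
        rw [norm_mul, AddChar.norm_apply, one_mul]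
        split_ifs <;> simp
    _ = Fintype.card F * #{u : F | (radicalPoly α β γ).eval u = 0} := by
        rw [← Finset.sum_filter, Finset.sum_const, nsmul_eq_mul, mul_comm]
    _ ≤ Fintype.card F * 81 := by
        gcongr
        have hroots : ({u : F | (radicalPoly α β γ).eval u = 0} : Finset F) ⊆
            (radicalPoly α β γ).roots.toFinset := fun u hu => by
          simpa [radicalPoly_ne_zero h] using hu
        exact_mod_cast (Finset.card_le_card hroots).trans ((Multiset.toFinset_card_le _).trans
          ((Polynomial.card_roots' _).trans (natDegree_radicalPoly_le α β γ)))

end TraceChar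

section FourthMoment

variable {F : Type*} [Field F] [Algebra (ZMod 3) F] [Fintype F] [DecidableEq F]

/-- Orthogonality of characters for a system of three equations. -/
theorem sum_sum_traceChar_system {X : Type*} [Fintype X] (f g h : X → F) :
    ∑ t : F × F × F, ∑ v : X, traceChar F (t.1 * f v + t.2.1 * g v + t.2.2 * h v) =
      (Fintype.card F : ℂ) ^ 3 *
        ((∑ v : X, if f v = 0 ∧ g v = 0 ∧ h v = 0 then (1 : ℤ) else 0 : ℤ) : ℂ) := by
  rw [Finset.sum_comm, Int.cast_sum, Finset.mul_sum]
  refine Finset.sum_congr rfl fun v _ => ?_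
  simp only [Fintype.sum_prod_type, AddChar.map_add_eq_mul]
  simp_rw [← Finset.mul_sum, ← Finset.sum_mul, ← Finset.mul_sum, ← Finset.sum_mul,
    AddChar.sum_mulShift _ (isPrimitive_traceChar (F := F))]
  by_cases hf : f v = 0 <;> by_cases hg : g v = 0 <;> by_cases hh : h v = 0 <;>
    simp [hf, hg, hh]
  ring

theorem sum_traceChar_quadratic_pow_four :
    ∑ t : F × F × F,
      (∑ x : F, traceChar F (t.1 * x ^ 2 + t.2.1 * x ^ 4 + t.2.2 * x ^ 10)) ^ 4 =
      (Fintype.card F : ℂ) ^ 3 * (8 * ((Fintype.card F : ℂ) - 1) ^ 2 + 1) := by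
  have : CharP F 3 := charP_of_injective_algebraMap (algebraMap (ZMod 3) F).injective 3
  have h := sum_sum_traceChar_system (F := F)
    (fun v : F × F × F × F => v.1 ^ 2 + v.2.1 ^ 2 + v.2.2.1 ^ 2 + v.2.2.2 ^ 2)
    (fun v => v.1 ^ 4 + v.2.1 ^ 4 + v.2.2.1 ^ 4 + v.2.2.2 ^ 4)
    (fun v => v.1 ^ 10 + v.2.1 ^ 10 + v.2.2.1 ^ 10 + v.2.2.2 ^ 10)
  rw [sum_power_sums_eq_zero] at h
  push_cast at h
  rw [← h]
  refine Finset.sum_congr rfl fun t _ => ?_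
  simp only [Fintype.sum_prod_type]
  have hfour : ∀ z : ℂ, z ^ 4 = z * (z * (z * z)) := fun z => by ring
  rw [hfour]
  simp_rw [Finset.sum_mul_sum, Finset.mul_sum, ← AddChar.map_add_eq_mul]
  refine Finset.sum_congr rfl fun x _ => Finset.sum_congr rfl fun y _ =>
    Finset.sum_congr rfl fun z _ => Finset.sum_congr rfl fun w _ => ?_
  congr 1
  ring

end FourthMoment

theorem zetaPow_three (a : ZMod 3) : zetaPow 3 a = ZMod.stdAddChar a := by
  rw [ZMod.stdAddChar_apply, ZMod.toCircle_apply, zetaPow]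

theorem nval_eq {m : ℕ} {ε : ℤ} {j : ℕ} :
    nval 3 m ε j = ε * I ^ (j % 2) * (√3 : ℂ) ^ (m + j) := by
  have hsqrt : √((3 : ℝ) ^ (m + j)) = √3 ^ (m + j) := by
    rw [Real.sqrt_eq_iff_mul_self_eq (by positivity) (by positivity), ← mul_pow,
      Real.mul_self_sqrt (by norm_num)]
  unfold nval
  push_cast
  rw [hsqrt]
  push_cast
  rcases Nat.mod_two_eq_zero_or_one j with h | h <;> simp [h]

theorem nval_pow_four {m : ℕ} {ε : ℤ} {j : ℕ} (hε : ε = 1 ∨ ε = -1) :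
    nval 3 m ε j ^ 4 = 9 ^ m * 9 ^ j := by
  have hε4 : (ε : ℂ) ^ 4 = 1 := by rcases hε with rfl | rfl <;> norm_num
  have hI : (I ^ (j % 2)) ^ 4 = 1 := by rw [← pow_mul, mul_comm, pow_mul, I_pow_four, one_pow]
  rw [nval_eq, mul_pow, mul_pow, hε4, hI, ← pow_mul, mul_comm (m + j), pow_mul,
    show ((√3 : ℝ) : ℂ) ^ 4 = 9 by
      linear_combination (((√3 : ℝ) : ℂ) ^ 2 + 3) * ofReal_sqrt_three_sq, pow_add]
  ring

theorem nval_inj {m : ℕ} {ε ε' : ℤ} {j j' : ℕ} (hε : ε = 1 ∨ ε = -1) (hε' : ε' = 1 ∨ ε' = -1)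
    (h : nval 3 m ε j = nval 3 m ε' j') : ε = ε' ∧ j = j' := by
  have hj : j = j' := by
    have h4 := congrArg (· ^ 4) h
    simp only [nval_pow_four hε, nval_pow_four hε'] at h4
    have h9 : (9 : ℂ) ^ j = 9 ^ j' := mul_left_cancel₀ (pow_ne_zero m (by norm_num)) h4
    exact Nat.pow_right_injective (by norm_num : 2 ≤ 9) (by exact_mod_cast h9)
  subst hj
  refine ⟨?_, rfl⟩
  have hs : ((√3 : ℝ) : ℂ) ≠ 0 := by
    intro h0
    simpa [h0] using ofReal_sqrt_three_sq
  rw [nval_eq, nval_eq] at h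
  have h' := mul_right_cancel₀ (pow_ne_zero _ I_ne_zero) (mul_right_cancel₀ (pow_ne_zero _ hs) h)
  exact_mod_cast h'

section Values

variable {m : ℕ}

theorem expSum_three [Fact (Nat.Prime 3)] [Fintype (GaloisField 3 m)] (α β γ : GaloisField 3 m) :
    expSum 3 m α β γ =
      ∑ x : GaloisField 3 m, traceChar _ (α * x ^ 2 + β * x ^ 4 + γ * x ^ 10) := by
  unfold expSum
  simp only [zetaPow_three, traceChar_apply]
  norm_num
  congr!

/-- For even `m` the nonzero parameters only give the ten values `±√(3^(m+j))`, `±i√(3^(m+j))`. -/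
theorem exists_expSum_three_eq_nval [Fact (Nat.Prime 3)] (hm : 0 < m) (hme : Even m)
    {α β γ : GaloisField 3 m} (h : (α, β, γ) ≠ (0, 0, 0)) :
    ∃ (ε : ℤ) (j : ℕ), (ε = 1 ∨ ε = -1) ∧ j < 5 ∧ expSum 3 m α β γ = nval 3 m ε j := by
  have := Fintype.ofFinite (GaloisField 3 m)
  obtain ⟨ε, k, r, hε, hkr, hsum⟩ := exists_sum_traceChar_quadratic α β γ
  rw [GaloisField.finrank 3 hm.ne'] at hkr
  have hcard : Fintype.card (GaloisField 3 m) = 3 ^ m := by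
    rw [Fintype.card_eq_nat_card, GaloisField.card 3 m hm.ne']
  have hk : k < 5 := by
    have hle := norm_sum_traceChar_quadratic_sq_le h
    rw [hsum, hcard, norm_mul, norm_mul, norm_pow, norm_pow, norm_mul, Complex.norm_I, one_mul,
      Complex.norm_real, Real.norm_of_nonneg (Real.sqrt_nonneg 3), Complex.norm_ofNat,
      show ‖(ε : ℂ)‖ = 1 by rcases hε with rfl | rfl <;> simp, one_mul, mul_pow, ← pow_mul,
      ← pow_mul, mul_comm r, pow_mul √3, Real.sq_sqrt (by norm_num), ← pow_add] at hle
    have hle' : 3 ^ (k * 2 + r) ≤ 3 ^ (m + 4) := by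
      rw [pow_add 3 m]
      exact_mod_cast hle
    have := (Nat.pow_le_pow_iff_right (by norm_num)).mp hle'
    omega
  have hvalue : (3 : ℂ) ^ k * (I * √3) ^ r = I ^ r * (√3 : ℂ) ^ (m + k) := by
    rw [← hkr, show k + r + k = 2 * k + r by ring, pow_add, pow_mul, ofReal_sqrt_three_sq]
    ring
  rw [mul_assoc, hvalue] at hsum
  have hI : I ^ r = (((-1) ^ (r / 2) : ℤ) : ℂ) * I ^ (k % 2) := by
    have hr : r = 2 * (r / 2) + k % 2 := by
      obtain ⟨n, hn⟩ := hme
      omega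
    conv_lhs => rw [hr, pow_add, pow_mul, I_sq]
    push_cast
    rfl
  refine ⟨ε * (-1) ^ (r / 2), k, ?_, hk, ?_⟩
  · rcases neg_one_pow_eq_or ℤ (r / 2) with h1 | h1 <;> rcases hε with rfl | rfl <;> simp [h1]
  · rw [expSum_three, hsum, hI, nval_eq]
    push_cast
    ring

theorem sum_ite_expSum_eq_nval [Fact (Nat.Prime 3)] (hm : 0 < m) (hme : Even m)
    {t : GaloisField 3 m × GaloisField 3 m × GaloisField 3 m} (h : t ≠ (0, 0, 0)) :
    ∑ j ∈ Finset.range 5, ∑ ε ∈ ({1, -1} : Finset ℤ), (9 : ℂ) ^ m * 9 ^ j *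
      (if expSum 3 m t.1 t.2.1 t.2.2 = nval 3 m ε j then 1 else 0) =
      expSum 3 m t.1 t.2.1 t.2.2 ^ 4 := by
  obtain ⟨ε₀, j₀, hε₀, hj₀, hS⟩ := exists_expSum_three_eq_nval hm hme h
  rw [hS, nval_pow_four hε₀, ← Finset.sum_product']
  have hmem : ∀ c ∈ Finset.range 5 ×ˢ ({1, -1} : Finset ℤ), c.2 = 1 ∨ c.2 = -1 := by
    intro c hc
    simpa using (Finset.mem_product.mp hc).2
  rw [Finset.sum_eq_single_of_mem (j₀, ε₀)]
  · simp
  · simpa using ⟨hj₀, hε₀⟩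
  · intro c hc hne
    rw [if_neg, mul_zero]
    intro heq
    obtain ⟨h1, h2⟩ := nval_inj hε₀ (hmem c hc) heq
    exact hne (Prod.ext h2.symm h1.symm)

theorem nn_eq_sum [Fact (Nat.Prime 3)] [Fintype (GaloisField 3 m)] [DecidableEq (GaloisField 3 m)]
    (ε : ℤ) (j : ℕ) :
    (nn 3 m ε j : ℂ) = ∑ t ∈ (Finset.univ : Finset (GaloisField 3 m × GaloisField 3 m ×
      GaloisField 3 m)).erase (0, 0, 0),
      if expSum 3 m t.1 t.2.1 t.2.2 = nval 3 m ε j then 1 else 0 := by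
  rw [Finset.sum_boole, nn, ← Set.ncard_coe_finset]
  congr 2
  ext t
  simp

end Values

theorem fourth_moment_identity (m : ℕ) (hm : 0 < m) (hme : Even m) :
    letI : Fact (Nat.Prime 3) := ⟨by norm_num⟩
    (nn 3 m 1 0 : ℤ) + nn 3 m (-1) 0 +
      (3 : ℤ) ^ 2 * ((nn 3 m 1 1 : ℤ) + nn 3 m (-1) 1) +
      (3 : ℤ) ^ 4 * ((nn 3 m 1 2 : ℤ) + nn 3 m (-1) 2) +
      (3 : ℤ) ^ 6 * ((nn 3 m 1 3 : ℤ) + nn 3 m (-1) 3) +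
      (3 : ℤ) ^ 8 * ((nn 3 m 1 4 : ℤ) + nn 3 m (-1) 4) =
      (8 * ((3 : ℤ) ^ m - 1) ^ 2 - (3 : ℤ) ^ m + 1) * (3 : ℤ) ^ m := by
  classical
  have hprime : Fact (Nat.Prime 3) := ⟨by norm_num⟩
  have := Fintype.ofFinite (GaloisField 3 m)
  have hcard : (Fintype.card (GaloisField 3 m) : ℂ) = 3 ^ m := by
    rw [Fintype.card_eq_nat_card, GaloisField.card 3 m hm.ne']
    push_cast
    rfl
  have hmoment := sum_traceChar_quadratic_pow_four (F := GaloisField 3 m)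
  simp_rw [← expSum_three] at hmoment
  have hzero : expSum 3 m 0 0 0 = 3 ^ m := by
    rw [expSum_three]
    simp [hcard]
  rw [← Finset.add_sum_erase _ _ (Finset.mem_univ (0, 0, 0)), hzero, hcard,
    ← Finset.sum_congr rfl fun t ht => sum_ite_expSum_eq_nval hm hme (Finset.mem_erase.mp ht).1,
    Finset.sum_comm] at hmoment
  simp_rw [Finset.sum_comm (s := univ.erase _), ← Finset.mul_sum, ← nn_eq_sum] at hmoment
  simp only [Finset.sum_range_succ, Finset.sum_range_zero,
    Finset.sum_pair (show (1 : ℤ) ≠ -1 by norm_num)] at hmoment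
  have h9 : (9 : ℂ) ^ m = (3 ^ m) ^ 2 := by rw [← pow_mul, mul_comm, pow_mul]; norm_num
  rw [h9] at hmoment
  have hq : ((3 : ℂ) ^ m) ^ 2 ≠ 0 := pow_ne_zero _ (pow_ne_zero _ (by norm_num))
  have hgoal := mul_left_cancel₀ hq (a := ((3 : ℂ) ^ m) ^ 2)
    (b := (nn 3 m 1 0 : ℂ) + nn 3 m (-1) 0 + 3 ^ 2 * ((nn 3 m 1 1 : ℂ) + nn 3 m (-1) 1) +
      3 ^ 4 * ((nn 3 m 1 2 : ℂ) + nn 3 m (-1) 2) + 3 ^ 6 * ((nn 3 m 1 3 : ℂ) + nn 3 m (-1) 3) +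
      3 ^ 8 * ((nn 3 m 1 4 : ℂ) + nn 3 m (-1) 4))
    (c := (8 * (3 ^ m - 1) ^ 2 - 3 ^ m + 1) * 3 ^ m) (by linear_combination hmoment)
  exact_mod_cast hgoal
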